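/- arXiv:1506.03655 — 2 statements merged into one kernel-verified Lean document; each statement's English description precedes it below -/
import Mathlib

section
/- Let L be a complex Lie algebra and δ a complex number. Then D(δ,1,0)(L) = D(0,1,−1)(L) ∩ D(2δ,1,1)(L); in particular, D(δ,1,0)(L) ⊆ D(0,1,−1)(L) and D(δ,1,0)(L) ⊆ D(2δ,1,1)(L). -/
/-- The space of `(α,β,γ)`-derivations of a complex Lie algebra `L`:
linear endomorphisms `D` with `α • D ⁅x,y⁆ = β • ⁅D x, y⁆ + γ • ⁅x, D y⁆`. -/
def abgDer (α β γ : ℂ) (L : Type*) [LieRing L] [LieAlgebra ℂ L] :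
    Submodule ℂ (Module.End ℂ L) where
  carrier := {D | ∀ x y : L, α • D ⁅x, y⁆ = β • ⁅D x, y⁆ + γ • ⁅x, D y⁆}
  zero_mem' := by intro x y; simp
  add_mem' := by
    intro a b ha hb x y
    simp only [LinearMap.add_apply, smul_add, add_lie, lie_add]
    rw [ha x y, hb x y]
    abel
  smul_mem' := by
    intro c D hD x y
    simp only [LinearMap.smul_apply, smul_lie, lie_smul]
    rw [smul_comm α c, hD x y, smul_add, smul_comm c β, smul_comm c γ]

/-!
For a fixed `D`, the triples `(α, β, γ)` for which `D` is an `(α, β, γ)`-derivation form a subspace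
of `ℂ³`, and skew-symmetry of the bracket makes it stable under exchanging `β` and `γ`. It therefore
contains `(α, β, γ)` if and only if it contains the difference `(0, β - γ, γ - β)` and the sum
`(2α, β + γ, β + γ)` of this triple and its exchange. The theorem is the case `(δ, 1, 0)`.
-/

section

variable {L : Type*} [LieRing L] [LieAlgebra ℂ L] {α β γ α' β' γ' : ℂ} {D : Module.End ℂ L}

theorem mem_abgDer :
    D ∈ abgDer α β γ L ↔ ∀ x y : L, α • D ⁅x, y⁆ = β • ⁅D x, y⁆ + γ • ⁅x, D y⁆ :=
  Iff.rfl

theorem mem_abgDer_swap (hD : D ∈ abgDer α β γ L) : D ∈ abgDer α γ β L := by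
  refine mem_abgDer.mpr fun x y ↦ ?_
  calc α • D ⁅x, y⁆ = -(α • D ⁅y, x⁆) := by rw [← lie_skew x y, map_neg, smul_neg]
    _ = β • -⁅D y, x⁆ + γ • -⁅y, D x⁆ := by rw [mem_abgDer.mp hD y x, neg_add, smul_neg, smul_neg]
    _ = γ • ⁅D x, y⁆ + β • ⁅x, D y⁆ := by rw [lie_skew, lie_skew, add_comm]

theorem mem_abgDer_linear_combination (s t : ℂ) (hD : D ∈ abgDer α β γ L)
    (hD' : D ∈ abgDer α' β' γ' L) :
    D ∈ abgDer (s * α + t * α') (s * β + t * β') (s * γ + t * γ') L := by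
  refine mem_abgDer.mpr fun x y ↦ ?_
  linear_combination (norm := module) s • mem_abgDer.mp hD x y + t • mem_abgDer.mp hD' x y

variable (L α β γ) in
theorem abgDer_delta_one_zero_general :
    abgDer α β γ L = abgDer 0 (β - γ) (γ - β) L ⊓ abgDer (2 * α) (β + γ) (β + γ) L := by
  ext D
  rw [Submodule.mem_inf]
  refine ⟨fun hD ↦ ⟨?_, ?_⟩, fun ⟨hdiff, hsum⟩ ↦ ?_⟩
  · convert mem_abgDer_linear_combination 1 (-1) hD (mem_abgDer_swap hD) using 2 <;> ring
  · convert mem_abgDer_linear_combination 1 1 hD (mem_abgDer_swap hD) using 2 <;> ring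
  · convert mem_abgDer_linear_combination (1 / 2) (1 / 2) hdiff hsum using 2 <;> ring

end

/-- For a complex Lie algebra `L` and `δ : ℂ`:
`D(δ,1,0)(L) = D(0,1,−1)(L) ∩ D(2δ,1,1)(L)`; in particular `D(δ,1,0)(L) ⊆ D(0,1,−1)(L)`
and `D(δ,1,0)(L) ⊆ D(2δ,1,1)(L)`. -/
theorem abgDer_delta_one_zero (L : Type*) [LieRing L] [LieAlgebra ℂ L] (δ : ℂ) :
    abgDer δ 1 0 L = abgDer 0 1 (-1) L ⊓ abgDer (2 * δ) 1 1 L ∧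
    abgDer δ 1 0 L ≤ abgDer 0 1 (-1) L ∧
    abgDer δ 1 0 L ≤ abgDer (2 * δ) 1 1 L := by
  have h : abgDer δ 1 0 L = abgDer 0 1 (-1) L ⊓ abgDer (2 * δ) 1 1 L := by
    simpa using abgDer_delta_one_zero_general L δ 1 0
  exact ⟨h, h.le.trans inf_le_left, h.le.trans inf_le_right⟩
end

section
/- Let V be a finite-dimensional normed complex vector space, let B : V × V → V be a bilinear map making V a complex Lie algebra, and let B₀ : V × V → V be a bilinear map. Suppose there is a family U(ε), ε ∈ (0,1], of invertible linear endomorphisms of V such that for all x, y ∈ V the limit lim_{ε→0⁺} U(ε)⁻¹(B(U(ε)x, U(ε)y)) exists and equals B₀(x,y) (i.e. (V, B₀) is a one-parametric continuous contraction of (V, B)). Then for all complex numbers α, β, γ, dim {D ∈ End(V) | α·D(B(x,y)) = β·B(Dx, y) + γ·B(x, Dy) for all x, y ∈ V} ≤ dim {D ∈ End(V) | α·D(B₀(x,y)) = β·B₀(Dx, y) + γ·B₀(x, Dy) for all x, y ∈ V}. -/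
/-!
The `(α,β,γ)`-derivations of `B` form the kernel of a linear map on `End V` that depends
continuously on `B`. Rank can only drop in a limit, so the dimension of such a kernel can only grow.
For every `ε` the multiplication `U(ε)⁻¹ (B (U(ε) x) (U(ε) y))` is isomorphic to `B`, hence has a
space of derivations of the same dimension, and these multiplications converge to `B₀`.
-/

/-- The space of `(α,β,γ)`-derivations of an algebra on `V` with multiplication given
by the bilinear map `B`. -/
def bilinDer {V : Type*} [AddCommGroup V] [Module ℂ V] (α β γ : ℂ)
    (B : V →ₗ[ℂ] V →ₗ[ℂ] V) : Submodule ℂ (Module.End ℂ V) where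
  carrier := {D | ∀ x y : V, α • D (B x y) = β • B (D x) y + γ • B x (D y)}
  zero_mem' := by intro x y; simp
  add_mem' := by
    intro a b ha hb x y
    simp only [LinearMap.add_apply, map_add, smul_add]
    rw [ha x y, hb x y]
    abel
  smul_mem' := by
    intro c D hD x y
    simp only [LinearMap.smul_apply, map_smul]
    rw [smul_comm α c, hD x y, smul_add, smul_comm c β, smul_comm c γ]

open Filter Topology Module

section RankSemicontinuity

variable {𝕜 E F ι : Type*} [NontriviallyNormedField 𝕜] [CompleteSpace 𝕜]
  [AddCommGroup E] [Module 𝕜 E] [FiniteDimensional 𝕜 E]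
  [NormedAddCommGroup F] [NormedSpace 𝕜 F]
  {l : Filter ι} {T : ι → E →ₗ[𝕜] F} {T₀ : E →ₗ[𝕜] F}

theorem eventually_le_finrank_range_of_tendsto
    (hT : ∀ x, Tendsto (fun i => T i x) l (𝓝 (T₀ x))) :
    ∀ᶠ i in l, finrank 𝕜 T₀.range ≤ finrank 𝕜 (T i).range := by
  let b := finBasis 𝕜 T₀.range
  choose e he using fun k => (b k).2
  have indep_limit : LinearIndependent 𝕜 fun k => T₀ (e k) := by
    simp only [he]
    exact b.linearIndependent.map' T₀.range.subtype (Submodule.ker_subtype _)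
  have tendsto_images : Tendsto (fun i k => T i (e k)) l (𝓝 fun k => T₀ (e k)) :=
    tendsto_pi_nhds.2 fun k => hT (e k)
  filter_upwards [tendsto_images.eventually indep_limit.eventually] with i indep
  have indep_range : LinearIndependent 𝕜 fun k => (T i).rangeRestrict (e k) :=
    LinearIndependent.of_comp (T i).range.subtype indep
  simpa using indep_range.fintype_card_le_finrank

theorem eventually_finrank_ker_le_of_tendsto
    (hT : ∀ x, Tendsto (fun i => T i x) l (𝓝 (T₀ x))) :
    ∀ᶠ i in l, finrank 𝕜 (T i).ker ≤ finrank 𝕜 T₀.ker := by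
  filter_upwards [eventually_le_finrank_range_of_tendsto hT] with i hi
  have nullity := T₀.finrank_range_add_finrank_ker
  have nullity_i := (T i).finrank_range_add_finrank_ker
  lia

end RankSemicontinuity

section Transport

variable {R V W : Type*} [CommRing R] [AddCommGroup V] [Module R V] [AddCommGroup W] [Module R W]

/-- Transport of structure: the multiplication on `W` for which `e` is an isomorphism of algebras
from `(V, B)`. A contraction is a limit of transports along `(U ε).symm`. -/
def bilinTransport (e : V ≃ₗ[R] W) (B : V →ₗ[R] V →ₗ[R] V) : W →ₗ[R] W →ₗ[R] W :=
  e.arrowCongr (e.arrowCongr e) B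

@[simp]
theorem bilinTransport_apply (e : V ≃ₗ[R] W) (B : V →ₗ[R] V →ₗ[R] V) (x y : W) :
    bilinTransport e B x y = e (B (e.symm x) (e.symm y)) :=
  rfl

end Transport

section TransportDerivations

variable {V W : Type*} [AddCommGroup V] [Module ℂ V] [AddCommGroup W] [Module ℂ W]

theorem conj_mem_bilinDer_bilinTransport_iff {α β γ : ℂ} (e : V ≃ₗ[ℂ] W)
    {B : V →ₗ[ℂ] V →ₗ[ℂ] V} {D : End ℂ V} :
    e.conj D ∈ bilinDer α β γ (bilinTransport e B) ↔ D ∈ bilinDer α β γ B := by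
  constructor
  · intro h x y
    apply e.injective
    simpa [LinearEquiv.conj_apply] using h (e x) (e y)
  · intro h x y
    simpa [LinearEquiv.conj_apply] using congrArg e (h (e.symm x) (e.symm y))

theorem finrank_bilinDer_bilinTransport (α β γ : ℂ) (e : V ≃ₗ[ℂ] W) (B : V →ₗ[ℂ] V →ₗ[ℂ] V) :
    finrank ℂ (bilinDer α β γ (bilinTransport e B)) = finrank ℂ (bilinDer α β γ B) := by
  have comap_conj : (bilinDer α β γ (bilinTransport e B)).comap (e.conj : End ℂ V →ₗ[ℂ] End ℂ W) =
      bilinDer α β γ B :=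
    Submodule.ext fun _ => conj_mem_bilinDer_bilinTransport_iff e
  rw [← comap_conj]
  exact (LinearEquiv.finrank_eq (e.conj.ofSubmodule' _)).symm

end TransportDerivations

section Defect

variable {R V : Type*} [CommRing R] [AddCommGroup V] [Module R V]

/-- The failure of an endomorphism `D` to be an `(α,β,γ)`-derivation of `B`, as a bilinear map
depending linearly on `D`. -/
def bilinDerDefect (α β γ : R) (B : V →ₗ[R] V →ₗ[R] V) : End R V →ₗ[R] V →ₗ[R] V →ₗ[R] V :=
  α • LinearMap.lcomp R (V →ₗ[R] V) B ∘ₗ LinearMap.llcomp R V V V -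
    (β • LinearMap.llcomp R V V (V →ₗ[R] V) B + γ • (LinearMap.llcomp R V V V ∘ₗ B).flip)

@[simp]
theorem bilinDerDefect_apply (α β γ : R) (B : V →ₗ[R] V →ₗ[R] V) (D : End R V) (x y : V) :
    bilinDerDefect α β γ B D x y = α • D (B x y) - (β • B (D x) y + γ • B x (D y)) :=
  rfl

end Defect

theorem ker_bilinDerDefect {V : Type*} [AddCommGroup V] [Module ℂ V] (α β γ : ℂ)
    (B : V →ₗ[ℂ] V →ₗ[ℂ] V) : (bilinDerDefect α β γ B).ker = bilinDer α β γ B := by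
  ext D
  simp only [LinearMap.mem_ker, LinearMap.ext_iff₂, bilinDerDefect_apply, LinearMap.zero_apply,
    sub_eq_zero]
  rfl

section Contraction

variable {V : Type*} [NormedAddCommGroup V] [NormedSpace ℂ V] [FiniteDimensional ℂ V]
  {ι : Type*} {l : Filter ι}

theorem tendsto_bilinDerDefect {B : ι → V →ₗ[ℂ] V →ₗ[ℂ] V} {B₀ : V →ₗ[ℂ] V →ₗ[ℂ] V}
    (hB : ∀ x y, Tendsto (fun i => B i x y) l (𝓝 (B₀ x y))) (α β γ : ℂ) (D : End ℂ V) (x y : V) :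
    Tendsto (fun i => bilinDerDefect α β γ (B i) D x y) l
      (𝓝 (bilinDerDefect α β γ B₀ D x y)) := by
  have tendsto_D : Tendsto (fun i => D (B i x y)) l (𝓝 (D (B₀ x y))) :=
    (D.continuous_of_finiteDimensional.tendsto _).comp (hB x y)
  exact (tendsto_D.const_smul α).sub (((hB (D x) y).const_smul β).add ((hB x (D y)).const_smul γ))

theorem eventually_finrank_bilinDer_le_of_tendsto {B : ι → V →ₗ[ℂ] V →ₗ[ℂ] V}
    {B₀ : V →ₗ[ℂ] V →ₗ[ℂ] V} (hB : ∀ x y, Tendsto (fun i => B i x y) l (𝓝 (B₀ x y)))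
    (α β γ : ℂ) :
    ∀ᶠ i in l, finrank ℂ (bilinDer α β γ (B i)) ≤ finrank ℂ (bilinDer α β γ B₀) := by
  let b := finBasis ℂ V
  -- Bilinear maps carry no topology, so they are identified with their tables of values on `b`.
  let table : (V →ₗ[ℂ] V →ₗ[ℂ] V) ≃ₗ[ℂ] (Fin (finrank ℂ V) → Fin (finrank ℂ V) → V) :=
    (b.constr ℂ).symm ≪≫ₗ LinearEquiv.piCongrRight fun _ => (b.constr ℂ).symm
  have tendsto_table (D : End ℂ V) :
      Tendsto (fun i => (table.toLinearMap ∘ₗ bilinDerDefect α β γ (B i)) D) l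
        (𝓝 ((table.toLinearMap ∘ₗ bilinDerDefect α β γ B₀) D)) :=
    tendsto_pi_nhds.2 fun j => tendsto_pi_nhds.2 fun k =>
      tendsto_bilinDerDefect hB α β γ D (b j) (b k)
  have ker_table (A : V →ₗ[ℂ] V →ₗ[ℂ] V) :
      (table.toLinearMap ∘ₗ bilinDerDefect α β γ A).ker = bilinDer α β γ A := by
    rw [LinearEquiv.ker_comp, ker_bilinDerDefect]
  filter_upwards [eventually_finrank_ker_le_of_tendsto tendsto_table] with i hi
  rwa [ker_table, ker_table] at hi

theorem finrank_bilinDer_le_of_contraction_general [l.NeBot]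
    {W : Type*} [AddCommGroup W] [Module ℂ W]
    (B : W →ₗ[ℂ] W →ₗ[ℂ] W) (B₀ : V →ₗ[ℂ] V →ₗ[ℂ] V) (U : ι → V ≃ₗ[ℂ] W)
    (hlim : ∀ x y, Tendsto (fun i => (U i).symm (B (U i x) (U i y))) l (𝓝 (B₀ x y)))
    (α β γ : ℂ) :
    finrank ℂ (bilinDer α β γ B) ≤ finrank ℂ (bilinDer α β γ B₀) := by
  have tendsto_transport (x y : V) :
      Tendsto (fun i => bilinTransport (U i).symm B x y) l (𝓝 (B₀ x y)) := hlim x y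
  obtain ⟨i, hi⟩ := (eventually_finrank_bilinDer_le_of_tendsto tendsto_transport α β γ).exists
  rwa [finrank_bilinDer_bilinTransport] at hi

end Contraction

/-- If a bilinear map `B₀` on a finite-dimensional normed complex vector space `V` is a
one-parametric continuous contraction of a Lie algebra structure `B` on `V` — i.e.
`B₀(x,y) = lim_{ε→0⁺} U(ε)⁻¹ (B (U(ε) x) (U(ε) y))` for a family `U(ε)`, `ε ∈ (0,1]`, of
invertible linear endomorphisms — then for all `α, β, γ ∈ ℂ` the dimension of the space
of `(α,β,γ)`-derivations of `(V,B)` is at most that of `(V,B₀)`. -/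
theorem finrank_bilinDer_le_of_contraction
    {V : Type*} [NormedAddCommGroup V] [NormedSpace ℂ V] [FiniteDimensional ℂ V]
    (B B₀ : V →ₗ[ℂ] V →ₗ[ℂ] V)
    (hanti : ∀ x : V, B x x = 0)
    (hjac : ∀ x y z : V, B x (B y z) + B z (B x y) + B y (B z x) = 0)
    (U : ℝ → (V ≃ₗ[ℂ] V))
    (hlim : ∀ x y : V,
      Filter.Tendsto (fun ε : ℝ => (U ε).symm (B (U ε x) (U ε y)))
        (nhdsWithin 0 (Set.Ioc 0 1)) (nhds (B₀ x y)))
    (α β γ : ℂ) :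
    Module.finrank ℂ ↥(bilinDer α β γ B) ≤ Module.finrank ℂ ↥(bilinDer α β γ B₀) := by
  have : (𝓝[Set.Ioc 0 1] (0 : ℝ)).NeBot := nhdsWithin_Ioc_eq_nhdsGT (zero_lt_one' ℝ) ▸ inferInstance
  exact finrank_bilinDer_le_of_contraction_general B B₀ U hlim α β γ
end
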